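/- Let (X, 𝓘) be a Polish ideal space and let 𝓐 ⊆ 𝓘 be a point-finite cover of X: ⋃𝓐 = X and for every x ∈ X the set {A ∈ 𝓐 : x ∈ A} is finite. Then there is a subfamily 𝓐₀ ⊆ 𝓐 such that ⋃𝓐₀ does not belong to the 𝓘-completion B̄(X). -/

import Mathlib

open Set MeasureTheory

/-!
Choose a point `e A` in every nonempty `A ∈ 𝓐`, and let `R` relate `x` to `e A` whenever
`x ∈ A ∈ 𝓐`. The relation `R` has finite sections over each `x` and null fibres over each `y`, and
the union of `{A ∈ 𝓐 | e A ∈ T}` is the preimage of `T` under `R`. Suppose that all these preimages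
belong to the completion. Applied to a countable basis, this makes `R` Borel over a Borel co-null
set, because finite sections are closed. If moreover `T` meets every uncountable closed set, then
`T` meets every uncountable analytic set by the perfect set theorem; the values of `R` over a Borel
set disjoint from the preimage of `T` form an analytic set disjoint from `T`, hence a countable one,
so such a Borel set is null and the preimage of `T` is co-null. As in Bernstein's construction,
there are infinitely many pairwise disjoint such sets `T`, so almost every `x` has infinitely many
values under `R`.

The σ-ideal is represented by its dual filter, and its completion by `eventuallyMeasurableSpace`.
-/

open Filter Function Metric Topology
open scoped ENNReal

section PerfectSetTheorem

variable {α X : Type*}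

theorem countable_image_setOf_exists_countable_image_nhdsWithin [TopologicalSpace α]
    [SecondCountableTopology α] (f : α → X) (E : Set α) :
    (f '' {p ∈ E | ∃ V ∈ 𝓝[E] p, (f '' V).Countable}).Countable := by
  set S := {p ∈ E | ∃ V ∈ 𝓝[E] p, (f '' V).Countable}
  choose! V hV hVc using fun p (hp : p ∈ S) => hp.2
  obtain ⟨t, htS, ht, hSt⟩ := TopologicalSpace.countable_cover_nhdsWithin
    fun p hp => nhdsWithin_mono p (sep_subset E _) (hV p hp)
  refine Countable.mono (image_mono hSt) ?_
  rw [image_iUnion₂]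
  exact ht.biUnion fun p hp => hVc p (htS hp)

theorem exists_two_points_nhdsWithin_image_not_countable [TopologicalSpace α]
    [SecondCountableTopology α] {f : α → X} {E : Set α} (hE : ¬(f '' E).Countable) :
    ∃ p ∈ E, ∃ q ∈ E, f p ≠ f q ∧ (∀ V ∈ 𝓝[E] p, ¬(f '' V).Countable) ∧
      ∀ V ∈ 𝓝[E] q, ¬(f '' V).Countable := by
  set S := {p ∈ E | ∃ V ∈ 𝓝[E] p, (f '' V).Countable}
  have hS : (f '' S).Countable := countable_image_setOf_exists_countable_image_nhdsWithin f E
  have exists_notMem {C : Set X} (hC : C.Countable) : ∃ p ∈ E, f p ∉ C := by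
    by_contra! hEC
    exact hE (hC.mono (image_subset_iff.2 hEC))
  have nhdsWithin_not_countable {p : α} (hp : p ∈ E) (hpS : f p ∉ f '' S) :
      ∀ V ∈ 𝓝[E] p, ¬(f '' V).Countable :=
    fun V hV hVc => hpS (mem_image_of_mem f ⟨hp, V, hV, hVc⟩)
  obtain ⟨p, hp, hpS⟩ := exists_notMem hS
  obtain ⟨q, hq, hqS⟩ := exists_notMem (hS.insert (f p))
  rw [mem_insert_iff, not_or] at hqS
  exact ⟨p, hp, q, hq, Ne.symm hqS.1, nhdsWithin_not_countable hp hpS,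
    nhdsWithin_not_countable hq hqS.2⟩

theorem exists_isClosed_subset_ediam_le_image_subset [PseudoEMetricSpace α] [TopologicalSpace X]
    {f : α → X} {E : Set α} {p : α} (hf : ContinuousAt f p) (hE : IsClosed E)
    (hp : ∀ V ∈ 𝓝[E] p, ¬(f '' V).Countable) {W : Set X} (hW : W ∈ 𝓝 (f p)) {ε : ℝ≥0∞}
    (hε : ε ≠ 0) :
    ∃ C ⊆ E, IsClosed C ∧ ¬(f '' C).Countable ∧ ediam C ≤ ε ∧ f '' C ⊆ W := by
  obtain ⟨δ, hδ, hδW⟩ := nhds_basis_closedEBall.mem_iff.1 (hf.preimage_mem_nhds hW)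
  have hmin : 0 < min δ (ε / 2) := lt_min hδ (ENNReal.half_pos hε)
  refine ⟨E ∩ closedEBall p (min δ (ε / 2)), inter_subset_left, hE.inter isClosed_closedEBall,
    hp _ (inter_mem_nhdsWithin E (closedEBall_mem_nhds p hmin)), ?_, ?_⟩
  · calc ediam (E ∩ closedEBall p (min δ (ε / 2)))
        ≤ ediam (closedEBall p (min δ (ε / 2))) := ediam_mono inter_subset_right
      _ ≤ 2 * min δ (ε / 2) := ediam_closedEBall_le
      _ ≤ 2 * (ε / 2) := by gcongr; exact min_le_right _ _
      _ = ε := ENNReal.mul_div_cancel two_ne_zero ENNReal.ofNat_ne_top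
  · exact image_subset_iff.2 fun x hx =>
      hδW (closedEBall_subset_closedEBall (min_le_left _ _) hx.2)

theorem exists_isClosed_ediam_le_disjoint_image [PseudoEMetricSpace α] [SecondCountableTopology α]
    [TopologicalSpace X] [T2Space X] {f : α → X} (hf : Continuous f) {E : Set α} (hE : IsClosed E)
    (hEc : ¬(f '' E).Countable) {ε : ℝ≥0∞} (hε : ε ≠ 0) :
    ∃ C : Bool → Set α,
      (∀ a, C a ⊆ E ∧ IsClosed (C a) ∧ ¬(f '' C a).Countable ∧ ediam (C a) ≤ ε) ∧
      Pairwise (Disjoint on fun a => f '' C a) := by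
  obtain ⟨p, -, q, -, hpq, hp, hq⟩ := exists_two_points_nhdsWithin_image_not_countable hEc
  obtain ⟨V, W, hV, hW, hVW⟩ := t2_separation_nhds hpq
  obtain ⟨C₀, hC₀E, hC₀, hC₀c, hC₀ε, hC₀V⟩ :=
    exists_isClosed_subset_ediam_le_image_subset hf.continuousAt hE hp hV hε
  obtain ⟨C₁, hC₁E, hC₁, hC₁c, hC₁ε, hC₁W⟩ :=
    exists_isClosed_subset_ediam_le_image_subset hf.continuousAt hE hq hW hε
  refine ⟨fun a => cond a C₁ C₀, Bool.forall_bool.2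
    ⟨⟨hC₀E, hC₀, hC₀c, hC₀ε⟩, ⟨hC₁E, hC₁, hC₁c, hC₁ε⟩⟩, ?_⟩
  simpa [Pairwise, onFun, disjoint_comm] using hVW.mono hC₀V hC₁W

theorem exists_cantorScheme_disjoint_image [PseudoMetricSpace α] [SecondCountableTopology α]
    [TopologicalSpace X] [T2Space X] {f : α → X} (hf : Continuous f) (hfc : ¬(range f).Countable) :
    ∃ A : List Bool → Set α, CantorScheme.ClosureAntitone A ∧ CantorScheme.VanishingDiam A ∧
      (∀ l, (A l).Nonempty) ∧ CantorScheme.Disjoint fun l => f '' A l := by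
  let P := {C : Set α // IsClosed C ∧ ¬(f '' C).Countable}
  choose split hsplit hdisj using fun (C : P) (n : ℕ) =>
    exists_isClosed_ediam_le_disjoint_image hf C.2.1 C.2.2
      (ENNReal.inv_ne_zero.2 (ENNReal.natCast_ne_top n))
  let D : List Bool → P := List.rec ⟨univ, isClosed_univ, by rwa [image_univ]⟩
    fun a l C => ⟨split C l.length a, (hsplit C l.length a).2.1, (hsplit C l.length a).2.2.1⟩
  have hanti : CantorScheme.Antitone fun l => (D l).1 :=
    fun l a => (hsplit (D l) l.length a).1
  refine ⟨fun l => (D l).1, hanti.closureAntitone fun l => (D l).2.1, fun x => ?_, fun l => ?_,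
    fun l a b hab => hdisj (D l) l.length hab⟩
  · have hle (n : ℕ) : ediam (D (PiNat.res x (n + 1))).1 ≤ (n : ℝ≥0∞)⁻¹ :=
      (hsplit (D (PiNat.res x n)) (PiNat.res x n).length (x n)).2.2.2.trans_eq
        (by rw [PiNat.res_length])
    exact (tendsto_add_atTop_iff_nat 1).1 <| tendsto_of_tendsto_of_tendsto_of_le_of_le
      tendsto_const_nhds ENNReal.tendsto_inv_nat_nhds_zero (fun _ => zero_le) hle
  · exact nonempty_iff_ne_empty.2 fun h => (D l).2.2 (by simp [h])

theorem injective_comp_inducedMap_of_disjoint_image {β : Type*} {A : List β → Set α} {f : α → X}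
    (hA : CantorScheme.Disjoint fun l => f '' A l) :
    Injective (f ∘ (CantorScheme.inducedMap A).2) := by
  intro x y hxy
  -- Both branches lie in the domain of the scheme of the values equal to `f` of the common point.
  let B : List β → Set X := fun l => f '' A l ∩ {f ((CantorScheme.inducedMap A).2 x)}
  have hB : CantorScheme.Disjoint B :=
    fun l a b hab => (hA l hab).mono inter_subset_left inter_subset_left
  have hx : x.1 ∈ (CantorScheme.inducedMap B).1 :=
    ⟨_, mem_iInter.2 fun n => ⟨mem_image_of_mem f (CantorScheme.map_mem x n), rfl⟩⟩
  have hy : y.1 ∈ (CantorScheme.inducedMap B).1 :=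
    ⟨_, mem_iInter.2 fun n => ⟨⟨_, CantorScheme.map_mem y n, hxy.symm⟩, rfl⟩⟩
  have hmap : (CantorScheme.inducedMap B).2 ⟨x, hx⟩ = (CantorScheme.inducedMap B).2 ⟨y, hy⟩ :=
    (CantorScheme.map_mem (A := B) ⟨x, hx⟩ 0).2.trans
      (CantorScheme.map_mem (A := B) ⟨y, hy⟩ 0).2.symm
  exact Subtype.ext (Subtype.mk.inj (hB.map_injective hmap))

theorem exists_nat_bool_injection_of_analyticSet_of_not_countable [TopologicalSpace X] [T2Space X]
    {S : Set X} (hS : AnalyticSet S) (hSc : ¬S.Countable) :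
    ∃ g : (ℕ → Bool) → X, range g ⊆ S ∧ Continuous g ∧ Injective g := by
  obtain ⟨β, _, _, f, hf, rfl⟩ := analyticSet_iff_exists_polishSpace_range.1 hS
  let := TopologicalSpace.upgradeIsCompletelyMetrizable β
  obtain ⟨A, hanti, hdiam, hne, hdisj⟩ := exists_cantorScheme_disjoint_image hf hSc
  have hdom (x : ℕ → Bool) : x ∈ (CantorScheme.inducedMap A).1 :=
    hanti.map_of_vanishingDiam hdiam hne ▸ mem_univ x
  refine ⟨fun x => f ((CantorScheme.inducedMap A).2 ⟨x, hdom x⟩), range_subset_iff.2 fun x =>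
    mem_range_self _, hf.comp (hdiam.map_continuous.comp (by fun_prop)), fun x y hxy => ?_⟩
  exact congrArg Subtype.val (injective_comp_inducedMap_of_disjoint_image hdisj hxy)

open Cardinal in
theorem exists_isClosed_subset_not_countable_of_analyticSet [TopologicalSpace X] [T2Space X]
    {S : Set X} (hS : AnalyticSet S) (hSc : ¬S.Countable) :
    ∃ C ⊆ S, IsClosed C ∧ ¬C.Countable := by
  obtain ⟨g, hgS, hg, hginj⟩ := exists_nat_bool_injection_of_analyticSet_of_not_countable hS hSc
  refine ⟨range g, hgS, (isCompact_range hg).isClosed, fun hc => ?_⟩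
  have hcard : #(ℕ → Bool) = 𝔠 := by simp
  have : Countable (range g) := hc
  have hcount : Countable (ℕ → Bool) := (rangeFactorization_injective.2 hginj).countable
  exact aleph0_lt_continuum.not_ge (hcard ▸ mk_le_aleph0_iff.2 hcount)

end PerfectSetTheorem

section Bernstein

open Cardinal

universe u

variable {X : Type u}

theorem exists_injective_forall_mem_of_mk_le {ι : Type u} (S : ι → Set X)
    (hS : ∀ i, #ι ≤ #(S i)) : ∃ g : ι → X, Injective g ∧ ∀ i, g i ∈ S i := by
  obtain ⟨_, _, hord⟩ := Cardinal.exists_ord_eq_type_lt ι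
  have exists_new (i : ι) (h : ∀ j < i, X) : ∃ x ∈ S i, ∀ j hj, h j hj ≠ x := by
    by_contra! hsub
    have hSi : #(S i) ≤ #(Iio i) := calc
      #(S i) ≤ #(range fun j : Iio i => h j.1 j.2) := mk_le_mk_of_subset fun x hx => by
        obtain ⟨j, hj, hjx⟩ := hsub x hx
        exact ⟨⟨j, hj⟩, hjx⟩
      _ ≤ #(Iio i) := mk_range_le
    exact ((hS i).trans hSi).not_gt (mk_Iio_lt i hord)
  choose F hFS hFne using exists_new
  let g : ι → X := wellFounded_lt.fix F
  have hg (i : ι) : g i = F i fun j _ => g j := WellFounded.fix_eq _ _ _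
  have hne (i j : ι) (hij : i < j) : g i ≠ g j := by
    rw [hg j]
    exact hFne j (fun k _ => g k) i hij
  refine ⟨g, fun i j hij => ?_, fun i => hg i ▸ hFS i _⟩
  exact le_antisymm (not_lt.1 fun h => hne j i h hij.symm) (not_lt.1 fun h => hne i j h hij)

variable [TopologicalSpace X]

theorem mk_setOf_isClosed_le_continuum [SecondCountableTopology X] :
    #{C : Set X | IsClosed C} ≤ 𝔠 := by
  let := borel X
  have : BorelSpace X := ⟨rfl⟩
  calc #{C : Set X | IsClosed C}
      ≤ #{C : Set X | MeasurableSet C} := mk_le_mk_of_subset fun C hC => hC.measurableSet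
    _ ≤ 𝔠 := by
      rw [BorelSpace.measurable_eq (α := X),
        (TopologicalSpace.isBasis_countableBasis X).borel_eq_generateFrom]
      exact MeasurableSpace.cardinal_measurableSet_le_continuum
        ((TopologicalSpace.countable_countableBasis X).le_aleph0.trans aleph0_le_continuum)

variable [PolishSpace X]

theorem continuum_le_mk_of_isClosed_of_not_countable {C : Set X} (hC : IsClosed C)
    (hCc : ¬C.Countable) : 𝔠 ≤ #C := by
  obtain ⟨g, hgC, -, hg⟩ := hC.exists_nat_bool_injection_of_not_countable hCc
  calc 𝔠 = lift.{u} #(ℕ → Bool) := by simp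
    _ = lift.{0} #(range g) := (mk_range_eq_of_injective hg).symm
    _ ≤ #C := by simpa using mk_le_mk_of_subset hgC

theorem exists_pairwise_disjoint_forall_isClosed_inter_nonempty :
    ∃ T : ℕ → Set X, Pairwise (Disjoint on T) ∧
      ∀ n C, IsClosed C → ¬C.Countable → (T n ∩ C).Nonempty := by
  let 𝓒 := {C : Set X // IsClosed C ∧ ¬C.Countable}
  have h𝓒 : #(𝓒 × ℕ) ≤ 𝔠 := calc
    #(𝓒 × ℕ) = #𝓒 * ℵ₀ := by simp
    _ ≤ 𝔠 * ℵ₀ := by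
      gcongr
      exact (mk_le_mk_of_subset fun C hC => hC.1).trans mk_setOf_isClosed_le_continuum
    _ = 𝔠 := continuum_mul_aleph0
  obtain ⟨g, hg, hgC⟩ := exists_injective_forall_mem_of_mk_le (fun p : 𝓒 × ℕ => p.1.1) fun p =>
    h𝓒.trans (continuum_le_mk_of_isClosed_of_not_countable p.1.2.1 p.1.2.2)
  refine ⟨fun n => range fun C => g (C, n), fun m n hmn => ?_, fun n C hC hCc => ?_⟩
  · rw [onFun, disjoint_range_iff]
    exact fun C C' h => hmn (congrArg Prod.snd (hg h))
  · exact ⟨_, mem_range_self ⟨C, hC, hCc⟩, hgC (⟨C, hC, hCc⟩, n)⟩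

theorem exists_pairwise_disjoint_forall_analyticSet_inter_nonempty :
    ∃ T : ℕ → Set X, Pairwise (Disjoint on T) ∧
      ∀ n S, AnalyticSet S → ¬S.Countable → (T n ∩ S).Nonempty := by
  obtain ⟨T, hdisj, hT⟩ := exists_pairwise_disjoint_forall_isClosed_inter_nonempty (X := X)
  refine ⟨T, hdisj, fun n S hS hSc => ?_⟩
  obtain ⟨C, hCS, hC, hCc⟩ := exists_isClosed_subset_not_countable_of_analyticSet hS hSc
  exact (hT n C hC hCc).mono (inter_subset_inter_right _ hCS)

end Bernstein

section Completion

variable {X : Type*} [m : MeasurableSpace X]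

theorem exists_filter_setOf_compl_mem_eq (𝓘 : Set (Set X))
    (hDown : ∀ A B : Set X, A ⊆ B → B ∈ 𝓘 → A ∈ 𝓘)
    (hUnion : ∀ f : ℕ → Set X, (∀ n, f n ∈ 𝓘) → (⋃ n, f n) ∈ 𝓘)
    (hEmpty : ∅ ∈ 𝓘) (hProper : univ ∉ 𝓘)
    (hBase : ∀ A ∈ 𝓘, ∃ B : Set X, A ⊆ B ∧ MeasurableSet B ∧ B ∈ 𝓘) :
    ∃ l : Filter X, l.NeBot ∧ CountableInterFilter l ∧ l.IsMeasurablyGenerated ∧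
      {A | Aᶜ ∈ l} = 𝓘 := by
  have hsUnion (𝓢 : Set (Set X)) (h𝓢 : 𝓢.Countable) (h𝓢𝓘 : ∀ A ∈ 𝓢, A ∈ 𝓘) : ⋃₀ 𝓢 ∈ 𝓘 := by
    rcases 𝓢.eq_empty_or_nonempty with rfl | hne
    · rwa [sUnion_empty]
    · obtain ⟨f, rfl⟩ := h𝓢.exists_eq_range hne
      rw [sUnion_range]
      exact hUnion f fun n => h𝓢𝓘 _ (mem_range_self n)
  refine ⟨Filter.ofCountableUnion 𝓘 hsUnion fun B hB A hAB => hDown A B hAB hB, ⟨fun hbot => ?_⟩,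
    inferInstance, ⟨fun s hs => ?_⟩, ?_⟩
  · rw [← empty_mem_iff_bot, mem_ofCountableUnion, compl_empty] at hbot
    exact hProper hbot
  · obtain ⟨B, hsB, hBm, hB⟩ := hBase sᶜ hs
    exact ⟨Bᶜ, by rwa [mem_ofCountableUnion, compl_compl], hBm.compl, compl_subset_comm.1 hsB⟩
  · simp only [mem_ofCountableUnion, compl_compl, ofPred_mem_eq]

variable {l : Filter X} [CountableInterFilter l]

theorem generateFrom_union_setOf_compl_mem :
    MeasurableSpace.generateFrom ({s : Set X | MeasurableSet s} ∪ {s | sᶜ ∈ l}) =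
      eventuallyMeasurableSpace m l := by
  refine le_antisymm (MeasurableSpace.generateFrom_le ?_) fun s hs => ?_
  · rintro s (hs | hs)
    · exact hs.eventuallyMeasurableSet
    · exact (eventuallyMeasurableSet_of_mem_filter hs).of_compl
  · obtain ⟨t, ht, hst⟩ := hs
    have hnull : (symmDiff t s)ᶜ ∈ l := by
      filter_upwards [eventuallyEq_set.1 hst] with x hx
      simp only [mem_compl_iff, mem_symmDiff]
      tauto
    rw [← symmDiff_symmDiff_cancel_left t s]
    exact MeasurableSet.symmDiff (MeasurableSpace.measurableSet_generateFrom (.inl ht))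
      (MeasurableSpace.measurableSet_generateFrom (.inr hnull))

theorem exists_measurableSet_forall_inter [l.IsMeasurablyGenerated] {ι : Sort*} [Countable ι]
    {s : ι → Set X} (hs : ∀ i, EventuallyMeasurableSet m l (s i)) :
    ∃ G ∈ l, MeasurableSet G ∧ ∀ i, MeasurableSet (s i ∩ G) := by
  choose t ht hst using hs
  obtain ⟨G, hG, hGm, hGst⟩ :=
    (eventually_countable_forall.2 fun i => eventuallyEq_set.1 (hst i)).exists_measurable_mem
  refine ⟨G, hG, hGm, fun i => ?_⟩
  have hinter : s i ∩ G = t i ∩ G := Set.ext fun x => and_congr_left fun hx => hGst x hx i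
  rw [hinter]
  exact (ht i).inter hGm

end Completion

section Relation

variable {X Y : Type*} {R : SetRel X Y}

theorem mem_setRel_iff_of_isClosed_section [TopologicalSpace Y] {𝓑 : Set (Set Y)}
    (h𝓑 : TopologicalSpace.IsTopologicalBasis 𝓑) {x : X} {y : Y}
    (hx : IsClosed {y | (x, y) ∈ R}) :
    (x, y) ∈ R ↔ ∀ b ∈ 𝓑, y ∈ b → x ∈ R.preimage b := by
  change y ∈ {y | (x, y) ∈ R} ↔ _
  rw [← hx.closure_eq, h𝓑.mem_closure_iff]
  rfl

variable [m : MeasurableSpace X] {l : Filter X} [CountableInterFilter l]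
  [l.IsMeasurablyGenerated]

theorem exists_measurableSet_setRel_inter_preimage_fst [TopologicalSpace Y]
    [SecondCountableTopology Y] [MeasurableSpace Y] [OpensMeasurableSpace Y]
    (hclosed : ∀ x, IsClosed {y | (x, y) ∈ R})
    (hR : ∀ U, IsOpen U → EventuallyMeasurableSet m l (R.preimage U)) :
    ∃ G ∈ l, MeasurableSet G ∧ MeasurableSet (R ∩ Prod.fst ⁻¹' G) := by
  let 𝓑 := TopologicalSpace.countableBasis Y
  have h𝓑 : TopologicalSpace.IsTopologicalBasis 𝓑 := TopologicalSpace.isBasis_countableBasis Y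
  obtain ⟨G, hG, hGm, hRG⟩ := exists_measurableSet_forall_inter
    fun b : 𝓑 => hR b (h𝓑.isOpen b.2)
  refine ⟨G, hG, hGm, ?_⟩
  have hinter : R ∩ Prod.fst ⁻¹' G =
      Prod.fst ⁻¹' G ∩ ⋂ b : 𝓑, Prod.snd ⁻¹' (b : Set Y)ᶜ ∪ Prod.fst ⁻¹' (R.preimage b ∩ G) := by
    ext ⟨x, y⟩
    simp only [mem_inter_iff, mem_setRel_iff_of_isClosed_section h𝓑 (hclosed x), mem_preimage,
      mem_iInter, mem_union, mem_compl_iff, Subtype.forall]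
    grind
  rw [hinter]
  exact (measurable_fst hGm).inter <| .iInter fun b =>
    (measurable_snd (h𝓑.isOpen b.2).measurableSet.compl).union (measurable_fst (hRG b))

theorem setRel_preimage_mem_of_forall_analyticSet_inter_nonempty [StandardBorelSpace X]
    [TopologicalSpace Y] [SecondCountableTopology Y] [MeasurableSpace Y] [OpensMeasurableSpace Y]
    [StandardBorelSpace Y] {G : Set X} (hG : G ∈ l) (hRG : MeasurableSet (R ∩ Prod.fst ⁻¹' G))
    (hdom : R.dom ∈ l) (hnull : ∀ y, ∀ᶠ x in l, (x, y) ∉ R) {T : Set Y}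
    (hT : ∀ S, AnalyticSet S → ¬S.Countable → (T ∩ S).Nonempty)
    (hRT : EventuallyMeasurableSet m l (R.preimage T)) : R.preimage T ∈ l := by
  obtain ⟨H, hH, hHm, hRTH⟩ := exists_measurableSet_forall_inter fun _ : Unit => hRT
  have hD : MeasurableSet (H \ R.preimage T) := by
    rw [← sdiff_inter_self_eq_sdiff]
    exact hHm.diff (hRTH ())
  let S : Set Y := Prod.snd '' (R ∩ Prod.fst ⁻¹' G ∩ Prod.fst ⁻¹' (H \ R.preimage T))
  have hS : AnalyticSet S := (hRG.inter (measurable_fst hD)).analyticSet_image measurable_snd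
  have hSc : S.Countable := by
    by_contra hSc
    obtain ⟨_, hyT, ⟨x, y⟩, ⟨⟨hxy, -⟩, -, hx⟩, rfl⟩ := hT S hS hSc
    exact hx ⟨y, hyT, hxy⟩
  filter_upwards [hG, hH, hdom, (eventually_countable_ball hSc).2 fun y _ => hnull y]
    with x hxG hxH ⟨y, hxy⟩ hxS
  by_contra hxT
  exact hxS y ⟨(x, y), ⟨⟨hxy, hxG⟩, hxH, hxT⟩, rfl⟩ hxy

theorem exists_not_eventuallyMeasurableSet_setRel_preimage [StandardBorelSpace X]
    [MeasurableSpace Y] [StandardBorelSpace Y] [l.NeBot]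
    (hfin : ∀ x, {y | (x, y) ∈ R}.Finite) (hdom : R.dom ∈ l)
    (hnull : ∀ y, ∀ᶠ x in l, (x, y) ∉ R) :
    ∃ T, ¬EventuallyMeasurableSet m l (R.preimage T) := by
  by_contra! hR
  obtain ⟨_, _, _⟩ := StandardBorelSpace.polish (α := Y)
  obtain ⟨G, hG, -, hRG⟩ := exists_measurableSet_setRel_inter_preimage_fst
    (fun x => (hfin x).isClosed) fun U _ => hR U
  obtain ⟨T, hdisj, hT⟩ := exists_pairwise_disjoint_forall_analyticSet_inter_nonempty (X := Y)
  have hpreimage (n : ℕ) : R.preimage (T n) ∈ l :=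
    setRel_preimage_mem_of_forall_analyticSet_inter_nonempty hG hRG hdom hnull (hT n) (hR (T n))
  obtain ⟨x, hx⟩ := (eventually_countable_forall.2 hpreimage).exists
  choose y hyT hxy using hx
  have hinj : Injective y := fun n k hnk =>
    hdisj.eq (not_disjoint_iff.2 ⟨y n, hyT n, hnk ▸ hyT k⟩)
  exact infinite_of_injective_forall_mem hinj hxy (hfin x)

end Relation

theorem stmt_11_general {X : Type*} [m : MeasurableSpace X] [StandardBorelSpace X]
    (l : Filter X) [l.NeBot] [CountableInterFilter l] [l.IsMeasurablyGenerated]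
    {𝓐 : Set (Set X)} (h𝓐 : ∀ A ∈ 𝓐, Aᶜ ∈ l) (hcov : ⋃₀ 𝓐 ∈ l)
    (hpf : ∀ x, {A | A ∈ 𝓐 ∧ x ∈ A}.Finite) :
    ∃ 𝓐₀ ⊆ 𝓐, ¬EventuallyMeasurableSet m l (⋃₀ 𝓐₀) := by
  have : Nonempty X := l.nonempty_of_neBot
  choose! e he using fun (A : Set X) (hA : A.Nonempty) => hA
  let R : SetRel X X := {p | ∃ A ∈ 𝓐, p.1 ∈ A ∧ e A = p.2}
  have hfin (x : X) : {y | (x, y) ∈ R}.Finite :=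
    ((hpf x).image e).subset fun y ⟨A, hA, hxA, hAy⟩ => ⟨A, ⟨hA, hxA⟩, hAy⟩
  have hdom : R.dom ∈ l := by
    filter_upwards [hcov] with x ⟨A, hA, hxA⟩ using ⟨e A, A, hA, hxA, rfl⟩
  have hnull (y : X) : ∀ᶠ x in l, (x, y) ∉ R := by
    filter_upwards [(eventually_countable_ball (hpf y).countable).2 fun A hA => h𝓐 A hA.1]
      with x hx ⟨A, hA, hxA, hAy⟩
    subst hAy
    exact hx A ⟨hA, he A ⟨x, hxA⟩⟩ hxA
  obtain ⟨T, hT⟩ := exists_not_eventuallyMeasurableSet_setRel_preimage hfin hdom hnull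
  have hpreimage : R.preimage T = ⋃₀ {A ∈ 𝓐 | e A ∈ T} := by
    ext x
    simp only [SetRel.mem_preimage, R]
    grind
  exact ⟨{A ∈ 𝓐 | e A ∈ T}, sep_subset 𝓐 _, hpreimage ▸ hT⟩

theorem stmt_11 {X : Type} [TopologicalSpace X] [PolishSpace X] [Uncountable X]
    [MeasurableSpace X] [BorelSpace X]
    (𝓘 : Set (Set X))
    (hDown : ∀ A B : Set X, A ⊆ B → B ∈ 𝓘 → A ∈ 𝓘)
    (hUnion : ∀ f : ℕ → Set X, (∀ n, f n ∈ 𝓘) → (⋃ n, f n) ∈ 𝓘)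
    (hProper : (univ : Set X) ∉ 𝓘)
    (hSing : ∀ x : X, ({x} : Set X) ∈ 𝓘)
    (hBase : ∀ A ∈ 𝓘, ∃ B : Set X, A ⊆ B ∧ MeasurableSet B ∧ B ∈ 𝓘)
    (𝓐 : Set (Set X)) (h𝓐 : 𝓐 ⊆ 𝓘)
    (hcov : ⋃₀ 𝓐 = univ)
    (hpf : ∀ x : X, {A | A ∈ 𝓐 ∧ x ∈ A}.Finite) :
    ∃ 𝓐₀ ⊆ 𝓐,
      ¬ MeasurableSet[MeasurableSpace.generateFrom ({s : Set X | MeasurableSet s} ∪ 𝓘)] (⋃₀ 𝓐₀) := by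
  have hEmpty : ∅ ∈ 𝓘 := hDown ∅ _ (empty_subset _) (hSing (Classical.arbitrary X))
  obtain ⟨l, _, _, _, rfl⟩ := exists_filter_setOf_compl_mem_eq 𝓘 hDown hUnion hEmpty hProper hBase
  rw [generateFrom_union_setOf_compl_mem]
  exact stmt_11_general l h𝓐 (hcov ▸ univ_mem) hpf
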